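/- For every 1-Lipschitz function f : ℤ₊ → ℝ and every n ∈ ℤ₊, the second difference of the Stein solution satisfies |Δ²g_f(n)| ≤ 2/α + 1/(α + β(1 + β + α/2)), and in particular |Δ²g_f(n)| ≤ 3/α. -/

import Mathlib

/-!
After an index shift, the Stein solution `X` of `φ` solves `𝓛 X - (Δ d) X = Δ φ`, where `𝓛` is the
generator with birth rate `α` and death rates `d n = β n + n (n - 1)`. Since `d` is quadratic, the
forward difference commutes with this equation up to a larger killing rate and a nonnegative
multiple of the previous difference. The maximum principle then shows, one difference after the
other, that `X` is completely monotone as soon as `-Δ φ` is, while the cumulative ratio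
`n ↦ π {0, …, n} / (α π n)` has nonnegative differences of all orders.

Up to the term `Δ f (n + 1) / α`, the second difference `Δ² X n` is a combination of the second
differences of the tail ratio and of the cumulative ratio, both of which are convex. Its two weights
are monotone in the oscillation of `f`, so among `1`-Lipschitz functions the extremal one is `-id`.
For `-id` the solution is completely monotone, hence its second difference is largest at `0`, where
the differenced equations bound it explicitly.
-/

open Filter Topology fwdDiff

/-! ### Forward differences and complete monotonicity -/

lemma fwdDiff_iterate_two_apply (X : ℕ → ℝ) (n : ℕ) :
    Δ_[1] ^[2] X n = X (n + 2) - 2 * X (n + 1) + X n := by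
  simp only [Function.iterate_succ, Function.iterate_zero, Function.comp_apply, id_eq, fwdDiff]
  ring

lemma tendsto_iterate_fwdDiff_zero {X : ℕ → ℝ} (hX : Tendsto X atTop (𝓝 0)) (k : ℕ) :
    Tendsto (Δ_[1] ^[k] X) atTop (𝓝 0) := by
  induction k with
  | zero => exact hX
  | succ k ih =>
    rw [Function.iterate_succ_apply']
    exact sub_zero (0 : ℝ) ▸ (ih.comp (tendsto_add_atTop_nat 1)).sub ih

/-- A sequence is completely monotone if its forward differences alternate in sign, starting with
nonnegative values. -/
def IsCompletelyMonotone (X : ℕ → ℝ) : Prop :=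
  ∀ k n : ℕ, 0 ≤ (-1) ^ k * Δ_[1] ^[k] X n

namespace IsCompletelyMonotone

variable {X : ℕ → ℝ}

lemma nonneg (hX : IsCompletelyMonotone X) (n : ℕ) : 0 ≤ X n := by
  simpa using hX 0 n

lemma neg_fwdDiff (hX : IsCompletelyMonotone X) : IsCompletelyMonotone (-Δ_[1] X) := by
  intro k n
  have hneg : -Δ_[1] X = (-1 : ℝ) • Δ_[1] X := by simp
  have hk := hX (k + 1) n
  rw [Function.iterate_succ_apply, pow_succ, mul_assoc] at hk
  rwa [hneg, fwdDiff_iter_const_smul, Pi.smul_apply, smul_eq_mul]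

lemma antitone (hX : IsCompletelyMonotone X) : Antitone X :=
  antitone_nat_of_succ_le fun n => by
    have h := hX.neg_fwdDiff.nonneg n
    simp only [Pi.neg_apply, fwdDiff] at h
    linarith

lemma iterate_fwdDiff_two (hX : IsCompletelyMonotone X) : IsCompletelyMonotone (Δ_[1] ^[2] X) := by
  convert hX.neg_fwdDiff.neg_fwdDiff using 1
  ext n
  simp only [fwdDiff_iterate_two_apply, Pi.neg_apply, fwdDiff]
  ring

lemma const_smul (hX : IsCompletelyMonotone X) {c : ℝ} (hc : 0 ≤ c) :
    IsCompletelyMonotone (c • X) := by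
  intro k n
  rw [fwdDiff_iter_const_smul, Pi.smul_apply, smul_eq_mul, mul_left_comm]
  exact mul_nonneg hc (hX k n)

end IsCompletelyMonotone

lemma isCompletelyMonotone_one : IsCompletelyMonotone 1 := by
  intro k n
  cases k with
  | zero => simp
  | succ k =>
    have hdiff : Δ_[1] (1 : ℕ → ℝ) = (0 : ℝ) • 1 := by ext; simp [fwdDiff]
    rw [Function.iterate_succ_apply, hdiff, fwdDiff_iter_const_smul, zero_smul, Pi.zero_apply,
      mul_zero]

lemma fwdDiff_single_zero : Δ_[1] (Pi.single 0 1 : ℕ → ℝ) = (-1 : ℝ) • Pi.single 0 1 := by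
  ext n
  cases n <;> simp [fwdDiff]

lemma isCompletelyMonotone_single_zero : IsCompletelyMonotone (Pi.single 0 1) := by
  have hiter (k : ℕ) : Δ_[1] ^[k] (Pi.single 0 1 : ℕ → ℝ) = (-1 : ℝ) ^ k • Pi.single 0 1 := by
    induction k with
    | zero => simp
    | succ k ih =>
      rw [Function.iterate_succ_apply, fwdDiff_single_zero, fwdDiff_iter_const_smul, ih,
        smul_smul, pow_succ']
  intro k n
  rw [hiter, Pi.smul_apply, smul_eq_mul, ← mul_assoc, ← mul_pow, neg_one_mul, neg_neg, one_pow,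
    one_mul]
  exact (Pi.single_nonneg.2 zero_le_one : (0 : ℕ → ℝ) ≤ Pi.single 0 1) n

lemma fwdDiff_neg_cast (n : ℕ) : Δ_[1] (fun k : ℕ => (-k : ℝ)) n = -1 := by
  simp [fwdDiff]

lemma abs_sub_le_neg_cast_sub {f : ℕ → ℝ} (hf : ∀ i j : ℕ, |f i - f j| ≤ |(i : ℝ) - j|) {i j : ℕ}
    (hij : i ≤ j) : |f i - f j| ≤ -(i : ℝ) - -j := by
  have hcast : (i : ℝ) - j ≤ 0 := sub_nonpos.2 (Nat.cast_le.2 hij)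
  linarith [hf i j, abs_of_nonpos hcast]

/-! ### The generator -/

/-- The generator of the birth-death chain on `ℕ` with constant birth rate `α` and death rates `d`.
At `n = 0` the truncated `n - 1` makes the death term vanish. -/
def birthDeathGenerator (α : ℝ) (d X : ℕ → ℝ) (n : ℕ) : ℝ :=
  α * (X (n + 1) - X n) - d n * (X n - X (n - 1))

lemma birthDeathGenerator_zero (α : ℝ) (d X : ℕ → ℝ) :
    birthDeathGenerator α d X 0 = α * Δ_[1] X 0 := by
  simp [birthDeathGenerator, fwdDiff]

lemma birthDeathGenerator_const_smul (α c : ℝ) (d X : ℕ → ℝ) (n : ℕ) :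
    birthDeathGenerator α d (c • X) n = c * birthDeathGenerator α d X n := by
  simp only [birthDeathGenerator, Pi.smul_apply, smul_eq_mul]
  ring

lemma fwdDiff_birthDeathGenerator (α : ℝ) {d : ℕ → ℝ} (hd : d 0 = 0) (X : ℕ → ℝ) (n : ℕ) :
    Δ_[1] (birthDeathGenerator α d X) n =
      birthDeathGenerator α d (Δ_[1] X) n - Δ_[1] d n * Δ_[1] X n := by
  cases n with
  | zero => simp only [birthDeathGenerator, fwdDiff, hd, zero_tsub, Nat.add_sub_cancel]; ring
  | succ n => simp only [birthDeathGenerator, fwdDiff, Nat.add_sub_cancel]; ring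

lemma nonpos_of_birthDeathGenerator_sub_nonneg {α : ℝ} (hα : 0 ≤ α) {d κ X : ℕ → ℝ}
    (hd : ∀ n, 0 ≤ d n) (hκ : ∀ n, 0 < κ n) (hX : Tendsto X atTop (𝓝 0))
    (hgen : ∀ n, 0 ≤ birthDeathGenerator α d X n - κ n * X n) (n : ℕ) : X n ≤ 0 := by
  by_contra! hpos
  obtain ⟨N, hmax⟩ : ∃ N, ∀ j, X j ≤ X N := by
    refine (continuous_of_discreteTopology (f := X)).exists_forall_ge' n ?_
    rw [cocompact_eq_cofinite, Nat.cofinite_eq_atTop]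
    exact (hX.eventually (gt_mem_nhds hpos)).mono fun _ => le_of_lt
  have hkill : 0 < κ N * X N := mul_pos (hκ N) (hpos.trans_le (hmax n))
  have hbirth := mul_nonneg hα (sub_nonneg.2 (hmax (N + 1)))
  have hdeath := mul_nonneg (hd N) (sub_nonneg.2 (hmax (N - 1)))
  have hN := hgen N
  simp only [birthDeathGenerator] at hN
  linarith

/-- The death rates of the polynomial birth-death distribution `PBD(α; 0, β, 1)`. -/
def pbdDeathRate (β : ℝ) (n : ℕ) : ℝ := β * n + n * ((n : ℝ) - 1)

lemma pbdDeathRate_zero (β : ℝ) : pbdDeathRate β 0 = 0 := by simp [pbdDeathRate]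

lemma pbdDeathRate_succ (β : ℝ) (n : ℕ) : pbdDeathRate β (n + 1) = (n + 1) * (β + n) := by
  simp only [pbdDeathRate]; push_cast; ring

lemma fwdDiff_pbdDeathRate (β : ℝ) (n : ℕ) : Δ_[1] (pbdDeathRate β) n = β + 2 * n := by
  simp only [fwdDiff, pbdDeathRate]; push_cast; ring

lemma pbdDeathRate_monotone {β : ℝ} (hβ : 0 ≤ β) : Monotone (pbdDeathRate β) :=
  monotone_nat_of_le_succ fun n => by
    have h := fwdDiff_pbdDeathRate β n
    have : 0 ≤ β + 2 * (n : ℝ) := by positivity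
    simp only [fwdDiff] at h
    linarith

lemma pbdDeathRate_nonneg {β : ℝ} (hβ : 0 ≤ β) (n : ℕ) : 0 ≤ pbdDeathRate β n :=
  (pbdDeathRate_zero β).ge.trans (pbdDeathRate_monotone hβ n.zero_le)

section DifferencedEquation

variable {α β : ℝ} {X h : ℕ → ℝ}

-- For `k = 0` the junk index `k - 1 = 0` is harmless, because its coefficient vanishes.
lemma birthDeathGenerator_iterate_fwdDiff
    (hX : ∀ n, birthDeathGenerator α (pbdDeathRate β) X n - (β + 2 * n) * X n = h n) (k n : ℕ) :
    birthDeathGenerator α (pbdDeathRate β) (Δ_[1] ^[k] X) n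
        - (k + 1) * (β + 2 * n + k) * Δ_[1] ^[k] X n
      = Δ_[1] ^[k] h n + (k + 1) * k * Δ_[1] ^[k - 1] X n := by
  induction k generalizing n with
  | zero => simpa using hX n
  | succ k ih =>
    have hcomm := fwdDiff_birthDeathGenerator α (pbdDeathRate_zero β) (Δ_[1] ^[k] X) n
    have hlower : k * (Δ_[1] ^[k - 1] X (n + 1) - Δ_[1] ^[k - 1] X n) = k * Δ_[1] ^[k] X n := by
      cases k with
      | zero => simp
      | succ k => rw [Function.iterate_succ_apply', fwdDiff, Nat.add_sub_cancel]
    have hn := ih n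
    have hn1 := ih (n + 1)
    rw [fwdDiff_pbdDeathRate] at hcomm
    rw [Nat.add_sub_cancel, Function.iterate_succ_apply', Function.iterate_succ_apply']
    simp only [fwdDiff] at hcomm ⊢
    push_cast at hn1 ⊢
    linear_combination hn1 - hn - hcomm + (k + 1) * hlower

lemma isCompletelyMonotone_of_birthDeathGenerator_eq (hα : 0 ≤ α) (hβ : 0 < β)
    (hX : ∀ n, birthDeathGenerator α (pbdDeathRate β) X n - (β + 2 * n) * X n = h n)
    (hlim : Tendsto X atTop (𝓝 0)) (hh : IsCompletelyMonotone (-h)) : IsCompletelyMonotone X := by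
  intro k
  induction k using Nat.strong_induction_on with
  | _ k ih =>
  have hlower (n : ℕ) : 0 ≤ (k + 1) * k * ((-1) ^ (k + 1) * Δ_[1] ^[k - 1] X n) := by
    cases k with
    | zero => simp
    | succ k =>
      have := ih k k.lt_succ_self n
      rw [Nat.add_sub_cancel, pow_add, pow_add]
      norm_num
      positivity
  have hsource (n : ℕ) : 0 ≤ (-1) ^ (k + 1) * Δ_[1] ^[k] h n := by
    have hneg : -h = (-1 : ℝ) • h := by simp
    have := hh k n
    rw [hneg, fwdDiff_iter_const_smul, Pi.smul_apply, smul_eq_mul] at this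
    rw [pow_succ, mul_assoc]
    exact this
  have hnonpos := nonpos_of_birthDeathGenerator_sub_nonneg (X := (-1 : ℝ) ^ (k + 1) • Δ_[1] ^[k] X)
    (κ := fun n => (k + 1) * (β + 2 * n + k)) hα (pbdDeathRate_nonneg hβ.le)
    (fun n => by positivity)
    (smul_zero (A := ℝ) ((-1 : ℝ) ^ (k + 1)) ▸ (tendsto_iterate_fwdDiff_zero hlim k).const_smul _)
    (fun n => by
      rw [birthDeathGenerator_const_smul, Pi.smul_apply, smul_eq_mul]
      linear_combination hsource n + hlower n
        - (-1) ^ (k + 1) * birthDeathGenerator_iterate_fwdDiff hX k n)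
  intro n
  have := hnonpos n
  rw [Pi.smul_apply, smul_eq_mul, pow_succ] at this
  linarith

lemma iterate_fwdDiff_nonneg_of_birthDeathGenerator_eq (hα : 0 < α) (hβ : 0 ≤ β)
    (hX : ∀ n, birthDeathGenerator α (pbdDeathRate β) X n - (β + 2 * n) * X n = h n)
    (hX_nonneg : ∀ n, 0 ≤ X n) (hh : ∀ k n, 0 ≤ Δ_[1] ^[k] h n) (k n : ℕ) :
    0 ≤ Δ_[1] ^[k] X n := by
  induction k using Nat.strong_induction_on generalizing n with
  | _ k ih =>
  cases k with
  | zero => exact hX_nonneg n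
  | succ k =>
    rw [Function.iterate_succ_apply']
    set Y := Δ_[1] ^[k] X
    have hlower (n : ℕ) : 0 ≤ (k + 1) * (β + 2 * n + k) * Y n + Δ_[1] ^[k] h n
        + (k + 1) * k * Δ_[1] ^[k - 1] X n := by
      have := ih k k.lt_succ_self n
      have := ih (k - 1) (by omega) n
      have := hh k n
      positivity
    have heq (n : ℕ) := birthDeathGenerator_iterate_fwdDiff hX k n
    have hstep (n : ℕ) (hdeath : 0 ≤ pbdDeathRate β n * (Y n - Y (n - 1))) : 0 ≤ Δ_[1] Y n := by
      refine nonneg_of_mul_nonneg_right (a := α) ?_ hα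
      have := heq n
      simp only [birthDeathGenerator, fwdDiff] at this ⊢
      linarith [hlower n]
    induction n with
    | zero => exact hstep 0 (by simp)
    | succ n ihn => exact hstep (n + 1) (mul_nonneg (pbdDeathRate_nonneg hβ _) ihn)

end DifferencedEquation

/-! ### The Stein equation -/

/-- A positive probability distribution on `ℕ` in detailed balance with birth rate `α` and death
rates `d`. -/
structure IsBirthDeathDistribution (α : ℝ) (d π : ℕ → ℝ) : Prop where
  pos : ∀ n, 0 < π n
  detailed_balance : ∀ n, α * π n = d (n + 1) * π (n + 1)
  hasSum_one : HasSum π 1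

/-- The solution `X` of `α X (n + 1) - d (n + 1) X n = r (n + 1)`, `α X 0 = r 0`, when `π` is in
detailed balance with `α` and `d`. For `r = 1` it is the cumulative ratio
`π {0, …, n} / (α π n)`. -/
noncomputable def steinInverse (α : ℝ) (π r : ℕ → ℝ) (n : ℕ) : ℝ :=
  (∑ k ∈ Finset.range (n + 1), r k * π k) / (α * π n)

/-- The shifted Stein solution `n ↦ g (n + 1)` of the test function `φ`. -/
noncomputable def steinSolution (α : ℝ) (π φ : ℕ → ℝ) : ℕ → ℝ :=
  steinInverse α π fun k => φ k - ∑' j, φ j * π j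

/-- The ratio `π {n + 1, n + 2, …} / (α π n)` for a probability distribution `π`. -/
noncomputable def tailRatio (α : ℝ) (π : ℕ → ℝ) (n : ℕ) : ℝ :=
  (1 - ∑ k ∈ Finset.range (n + 1), π k) / (α * π n)

lemma steinSolution_single_zero (α : ℝ) (π : ℕ → ℝ) :
    steinSolution α π (Pi.single 0 1) = π 0 • tailRatio α π := by
  ext n
  have hmean : ∑' j, (Pi.single 0 1 : ℕ → ℝ) j * π j = π 0 := by
    rw [tsum_eq_single 0 fun j hj => by simp [hj]]
    simp
  simp only [steinSolution, steinInverse, tailRatio, hmean, sub_mul, Finset.sum_sub_distrib,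
    ← Finset.mul_sum, Pi.smul_apply, smul_eq_mul]
  rw [Finset.sum_range_succ' (fun k => (Pi.single 0 1 : ℕ → ℝ) k * π k)]
  simp only [Pi.single_eq_same, Pi.single_apply, Nat.succ_ne_zero, if_false, zero_mul, one_mul,
    Finset.sum_const_zero, zero_add]
  ring

namespace IsBirthDeathDistribution

variable {α : ℝ} {d π : ℕ → ℝ}

lemma mul_steinInverse_zero (hπ : IsBirthDeathDistribution α d π) (hα : α ≠ 0) (r : ℕ → ℝ) :
    α * steinInverse α π r 0 = r 0 := by
  have := (hπ.pos 0).ne'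
  simp only [steinInverse, zero_add, Finset.sum_range_one]
  field_simp

lemma mul_steinInverse_succ (hπ : IsBirthDeathDistribution α d π) (hα : α ≠ 0) (r : ℕ → ℝ)
    (n : ℕ) : α * steinInverse α π r (n + 1) = d (n + 1) * steinInverse α π r n + r (n + 1) := by
  have hn := (hπ.pos n).ne'
  have hn1 := (hπ.pos (n + 1)).ne'
  have hd : d (n + 1) = α * π n / π (n + 1) := eq_div_of_mul_eq hn1 (hπ.detailed_balance n).symm
  simp only [steinInverse, Finset.sum_range_succ _ (n + 1), hd]
  field_simp

lemma eq_steinInverse (hπ : IsBirthDeathDistribution α d π) (hα : α ≠ 0) {X r : ℕ → ℝ}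
    (h0 : α * X 0 = r 0) (hsucc : ∀ n, α * X (n + 1) = d (n + 1) * X n + r (n + 1)) :
    X = steinInverse α π r := by
  ext n
  apply mul_left_cancel₀ hα
  induction n with
  | zero => rw [h0, hπ.mul_steinInverse_zero hα]
  | succ n ih => rw [hsucc, hπ.mul_steinInverse_succ hα, mul_left_cancel₀ hα ih]

lemma birthDeathGenerator_steinInverse (hπ : IsBirthDeathDistribution α d π) (hα : α ≠ 0)
    (hd : d 0 = 0) (r : ℕ → ℝ) (n : ℕ) :
    birthDeathGenerator α d (steinInverse α π r) n - Δ_[1] d n * steinInverse α π r n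
      = Δ_[1] r n := by
  have hsucc := hπ.mul_steinInverse_succ hα r n
  cases n with
  | zero =>
    have h0 := hπ.mul_steinInverse_zero hα r
    rw [birthDeathGenerator_zero]
    simp only [fwdDiff, zero_add, hd] at hsucc ⊢
    linear_combination hsucc - h0
  | succ n =>
    have hn := hπ.mul_steinInverse_succ hα r n
    simp only [birthDeathGenerator, fwdDiff, Nat.add_sub_cancel]
    linear_combination hsucc - hn

lemma birthDeathGenerator_steinSolution (hπ : IsBirthDeathDistribution α d π) (hα : α ≠ 0)
    (hd : d 0 = 0) (φ : ℕ → ℝ) (n : ℕ) :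
    birthDeathGenerator α d (steinSolution α π φ) n - Δ_[1] d n * steinSolution α π φ n
      = Δ_[1] φ n := by
  rw [steinSolution, hπ.birthDeathGenerator_steinInverse hα hd]
  simp only [fwdDiff, sub_sub_sub_cancel_right]

lemma zero_mul_add_le (hπ : IsBirthDeathDistribution α d π) (hα : 0 < α) (hd : Monotone d)
    (n k : ℕ) : π 0 * π (k + n) ≤ π n * π k := by
  induction k with
  | zero => rw [zero_add, mul_comm]
  | succ k ih =>
    have hpos : 0 < d (k + 1) := by
      refine pos_of_mul_pos_left ?_ (hπ.pos (k + 1)).le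
      rw [← hπ.detailed_balance]
      exact mul_pos hα (hπ.pos k)
    refine le_of_mul_le_mul_left ?_ hpos
    have hmono : d (k + 1) ≤ d (k + n + 1) := hd (by omega)
    calc d (k + 1) * (π 0 * π (k + 1 + n))
        ≤ d (k + n + 1) * (π 0 * π (k + n + 1)) := by
          rw [Nat.add_right_comm k 1 n]
          have := hπ.pos 0
          have := hπ.pos (k + n + 1)
          gcongr
      _ = α * (π 0 * π (k + n)) := by linear_combination -π 0 * hπ.detailed_balance (k + n)
      _ ≤ α * (π n * π k) := by gcongr
      _ = d (k + 1) * (π n * π (k + 1)) := by linear_combination π n * hπ.detailed_balance k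

lemma zero_mul_tsum_add_le (hπ : IsBirthDeathDistribution α d π) (hα : 0 < α) (hd : Monotone d)
    (n : ℕ) : π 0 * ∑' k, π (k + n) ≤ π n := by
  have hshift := (summable_nat_add_iff n).2 hπ.hasSum_one.summable
  have h := hasSum_le (hπ.zero_mul_add_le hα hd n) (hshift.hasSum.mul_left (π 0))
    (hπ.hasSum_one.mul_left (π n))
  rwa [mul_one] at h

lemma steinSolution_eq_neg_tsum (hπ : IsBirthDeathDistribution α d π) {φ : ℕ → ℝ}
    (hφ : Summable fun k => φ k * π k) (n : ℕ) :
    steinSolution α π φ n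
      = -(∑' k, (φ (k + (n + 1)) - ∑' j, φ j * π j) * π (k + (n + 1))) / (α * π n) := by
  set μ := ∑' j, φ j * π j
  have hcentered : HasSum (fun k => (φ k - μ) * π k) 0 := by
    simpa [sub_mul, μ] using hφ.hasSum.sub (hπ.hasSum_one.mul_left μ)
  have hsplit := hcentered.summable.sum_add_tsum_nat_add (n + 1)
  rw [hcentered.tsum_eq] at hsplit
  rw [steinSolution, steinInverse, eq_neg_of_add_eq_zero_left hsplit]

/-! ### Comparison of Stein solutions -/

lemma tsum_mul_sub_eq (hπ : IsBirthDeathDistribution α d π) {φ : ℕ → ℝ}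
    (hφ : Summable fun k => φ k * π k) (c : ℝ) (m : ℕ) :
    ∑' k, φ k * π k - c = ∑ k ∈ Finset.range m, (φ k - c) * π k
      - ∑' k, (c - φ (k + m)) * π (k + m) := by
  have hcentered : HasSum (fun k => (φ k - c) * π k) (∑' k, φ k * π k - c) := by
    simpa [sub_mul] using hφ.hasSum.sub (hπ.hasSum_one.mul_left c)
  rw [← hcentered.tsum_eq, ← hcentered.summable.sum_add_tsum_nat_add m, sub_eq_add_neg, ← tsum_neg]
  simp only [← neg_mul, neg_sub]

lemma steinSolution_eq_tailRatio_add_steinInverse_add (hπ : IsBirthDeathDistribution α d π)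
    {φ : ℕ → ℝ} (hφ : Summable fun k => φ k * π k) (c : ℝ) (m n : ℕ) :
    steinSolution α π φ n
      = (∑ k ∈ Finset.range m, (φ k - c) * π k) * tailRatio α π n
        + (∑' k, (c - φ (k + m)) * π (k + m)) * steinInverse α π 1 n
        + (∑ k ∈ Finset.range (n + 1), (φ k - c) * π k - ∑ k ∈ Finset.range m, (φ k - c) * π k)
          / (α * π n) := by
  have hmean := hπ.tsum_mul_sub_eq hφ c m
  have hsum : ∑ k ∈ Finset.range (n + 1), (φ k - ∑' j, φ j * π j) * π k
      = ∑ k ∈ Finset.range (n + 1), (φ k - c) * π k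
        - (∑' j, φ j * π j - c) * ∑ k ∈ Finset.range (n + 1), π k := by
    rw [Finset.mul_sum, ← Finset.sum_sub_distrib]
    exact Finset.sum_congr rfl fun k _ => by ring
  simp only [steinSolution, steinInverse, tailRatio, Pi.one_apply, one_mul]
  rw [hsum, hmean]
  ring

lemma fwdDiff_iterate_two_steinSolution (hπ : IsBirthDeathDistribution α d π) {φ : ℕ → ℝ}
    (hφ : Summable fun k => φ k * π k) (n : ℕ) :
    Δ_[1] ^[2] (steinSolution α π φ) n
      = (∑ k ∈ Finset.range (n + 1), (φ k - φ (n + 1)) * π k) * Δ_[1] ^[2] (tailRatio α π) n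
        + (∑' k, (φ (n + 1) - φ (k + (n + 2))) * π (k + (n + 2)))
          * Δ_[1] ^[2] (steinInverse α π 1) n
        + Δ_[1] φ (n + 1) / α := by
  set c := φ (n + 1)
  set A := ∑ k ∈ Finset.range (n + 1), (φ k - c) * π k
  have hA1 : ∑ k ∈ Finset.range (n + 2), (φ k - c) * π k = A := by
    rw [Finset.sum_range_succ, sub_self, zero_mul, add_zero]
  have hA2 : ∑ k ∈ Finset.range (n + 3), (φ k - c) * π k = A + (φ (n + 2) - c) * π (n + 2) := by
    rw [Finset.sum_range_succ, hA1]
  have hlast : (φ (n + 2) - c) * π (n + 2) / (α * π (n + 2)) = Δ_[1] φ (n + 1) / α :=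
    mul_div_mul_right _ _ (hπ.pos _).ne'
  simp only [fwdDiff_iterate_two_apply,
    hπ.steinSolution_eq_tailRatio_add_steinInverse_add hφ c (n + 2), hA1, hA2, A,
    add_sub_cancel_left, hlast]
  ring

section Domination

variable {f ψ : ℕ → ℝ}

lemma abs_fwdDiff_iterate_two_steinSolution_le (hπ : IsBirthDeathDistribution α d π) (hα : 0 < α)
    (hf : Summable fun k => f k * π k) (hψ : Summable fun k => ψ k * π k)
    (hdom : ∀ i j, i ≤ j → |f i - f j| ≤ ψ i - ψ j) {n : ℕ}
    (htail : 0 ≤ Δ_[1] ^[2] (tailRatio α π) n) (hcdf : 0 ≤ Δ_[1] ^[2] (steinInverse α π 1) n) :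
    |Δ_[1] ^[2] (steinSolution α π f) n|
      ≤ Δ_[1] ^[2] (steinSolution α π ψ) n - 2 * Δ_[1] ψ (n + 1) / α := by
  have hlower : |∑ k ∈ Finset.range (n + 1), (f k - f (n + 1)) * π k|
      ≤ ∑ k ∈ Finset.range (n + 1), (ψ k - ψ (n + 1)) * π k := by
    refine (Finset.abs_sum_le_sum_abs _ _).trans (Finset.sum_le_sum fun k hk => ?_)
    rw [abs_mul, abs_of_pos (hπ.pos k)]
    exact mul_le_mul_of_nonneg_right (hdom _ _ (Finset.mem_range.1 hk).le) (hπ.pos k).le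
  have hupper : |∑' k, (f (n + 1) - f (k + (n + 2))) * π (k + (n + 2))|
      ≤ ∑' k, (ψ (n + 1) - ψ (k + (n + 2))) * π (k + (n + 2)) := by
    have hsummable : Summable fun k => (ψ (n + 1) - ψ (k + (n + 2))) * π (k + (n + 2)) := by
      have h := (hπ.hasSum_one.summable.mul_left (ψ (n + 1))).sub hψ
      simpa only [sub_mul] using (summable_nat_add_iff (n + 2)).2 h
    rw [← Real.norm_eq_abs]
    refine tsum_of_norm_bounded hsummable.hasSum fun k => ?_
    rw [norm_mul, Real.norm_eq_abs, Real.norm_of_nonneg (hπ.pos _).le]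
    exact mul_le_mul_of_nonneg_right (hdom _ _ (by omega)) (hπ.pos _).le
  have hlast : |Δ_[1] f (n + 1) / α| ≤ -Δ_[1] ψ (n + 1) / α := by
    rw [abs_div, abs_of_pos hα, fwdDiff, fwdDiff, abs_sub_comm, neg_sub]
    gcongr
    exact hdom _ _ (Nat.le_succ _)
  have htail_le := mul_le_mul_of_nonneg_right hlower htail
  have hcdf_le := mul_le_mul_of_nonneg_right hupper hcdf
  rw [hπ.fwdDiff_iterate_two_steinSolution hf, hπ.fwdDiff_iterate_two_steinSolution hψ]
  refine (abs_add_three _ _ _).trans ?_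
  rw [abs_mul, abs_mul, abs_of_nonneg htail, abs_of_nonneg hcdf]
  linear_combination htail_le + hcdf_le + hlast

lemma abs_steinSolution_zero_le (hπ : IsBirthDeathDistribution α d π) (hα : 0 < α)
    (hf : Summable fun k => f k * π k) (hψ : Summable fun k => ψ k * π k)
    (hdom : ∀ i j, i ≤ j → |f i - f j| ≤ ψ i - ψ j) :
    |steinSolution α π f 0| ≤ steinSolution α π ψ 0 := by
  have hcentered {φ : ℕ → ℝ} (hφ : Summable fun k => φ k * π k) :
      HasSum (fun k => (φ 0 - φ k) * π k) (α * steinSolution α π φ 0) := by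
    rw [steinSolution, hπ.mul_steinInverse_zero hα.ne']
    simpa [sub_mul] using (hπ.hasSum_one.mul_left (φ 0)).sub hφ.hasSum
  refine le_of_mul_le_mul_left ?_ hα
  rw [← abs_of_pos hα, ← abs_mul, abs_of_pos hα]
  refine (hcentered hf).norm_le_of_bounded (hcentered hψ) fun k => ?_
  rw [norm_mul, Real.norm_eq_abs, Real.norm_of_nonneg (hπ.pos k).le]
  exact mul_le_mul_of_nonneg_right (hdom _ _ k.zero_le) (hπ.pos k).le

lemma abs_fwdDiff_steinSolution_zero_le (hπ : IsBirthDeathDistribution α d π) (hα : 0 < α)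
    (hd0 : d 0 = 0) (hd1 : 0 ≤ d 1) (hf : Summable fun k => f k * π k)
    (hψ : Summable fun k => ψ k * π k) (hdom : ∀ i j, i ≤ j → |f i - f j| ≤ ψ i - ψ j) :
    |Δ_[1] (steinSolution α π f) 0| ≤ Δ_[1] (steinSolution α π ψ) 0 - 2 * Δ_[1] ψ 0 / α := by
  have heq (φ : ℕ → ℝ) :
      Δ_[1] (steinSolution α π φ) 0 = (Δ_[1] φ 0 + d 1 * steinSolution α π φ 0) / α := by
    have h := hπ.birthDeathGenerator_steinSolution hα.ne' hd0 φ 0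
    rw [birthDeathGenerator_zero, fwdDiff, fwdDiff, fwdDiff, hd0, sub_zero, zero_add] at h
    rw [eq_div_iff hα.ne', fwdDiff, fwdDiff, zero_add]
    linear_combination h
  have hdiff : |Δ_[1] f 0| ≤ -Δ_[1] ψ 0 := by
    rw [fwdDiff, fwdDiff, abs_sub_comm, neg_sub]
    exact hdom _ _ (Nat.zero_le _)
  have hvalue := mul_le_mul_of_nonneg_left (hπ.abs_steinSolution_zero_le hα hf hψ hdom) hd1
  rw [heq, heq, abs_div, abs_of_pos hα, ← sub_div]
  gcongr
  refine (abs_add_le _ _).trans ?_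
  rw [abs_mul, abs_of_nonneg hd1]
  linarith

end Domination

/-! ### The polynomial birth-death distribution -/

section Polynomial

variable {β : ℝ}

lemma succ_mul_succ (hπ : IsBirthDeathDistribution α (pbdDeathRate β) π) (hβ : 0 < β) (k : ℕ) :
    (k + 1) * π (k + 1) = α / (β + k) * π k := by
  have hbal := hπ.detailed_balance k
  rw [pbdDeathRate_succ] at hbal
  rw [div_mul_eq_mul_div, eq_div_iff (by positivity)]
  linear_combination -hbal

lemma summable_cast_mul (hπ : IsBirthDeathDistribution α (pbdDeathRate β) π) (hα : 0 ≤ α)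
    (hβ : 0 < β) : Summable fun k : ℕ => k * π k := by
  rw [← summable_nat_add_iff 1]
  refine .of_nonneg_of_le (fun k => ?_) (fun k => ?_) (hπ.hasSum_one.summable.mul_left (α / β))
  · exact mul_nonneg (Nat.cast_nonneg _) (hπ.pos _).le
  · rw [Nat.cast_succ, hπ.succ_mul_succ hβ]
    have := hπ.pos k
    gcongr
    exact le_add_of_nonneg_right k.cast_nonneg

lemma summable_neg_cast_mul (hπ : IsBirthDeathDistribution α (pbdDeathRate β) π) (hα : 0 ≤ α)
    (hβ : 0 < β) : Summable fun k : ℕ => -(k : ℝ) * π k := by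
  simpa only [neg_mul] using (hπ.summable_cast_mul hα hβ).neg

variable {φ : ℕ → ℝ} {K : ℝ}

lemma summable_mul_of_linear_growth (hπ : IsBirthDeathDistribution α (pbdDeathRate β) π)
    (hα : 0 ≤ α) (hβ : 0 < β) (hφ : ∀ k : ℕ, |φ k - φ 0| ≤ K * k) :
    Summable fun k => φ k * π k := by
  have hdiff : Summable fun k => (φ k - φ 0) * π k := by
    refine .of_norm_bounded ((hπ.summable_cast_mul hα hβ).mul_left K) fun k => ?_
    rw [norm_mul, Real.norm_eq_abs, Real.norm_of_nonneg (hπ.pos k).le, ← mul_assoc]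
    exact mul_le_mul_of_nonneg_right (hφ k) (hπ.pos k).le
  simpa [sub_mul] using hdiff.add (hπ.hasSum_one.summable.mul_left (φ 0))

lemma abs_sub_mul_succ_le (hπ : IsBirthDeathDistribution α (pbdDeathRate β) π) (hβ : 0 < β)
    (hφ : ∀ k : ℕ, |φ k - φ 0| ≤ K * k) (μ : ℝ) (k : ℕ) :
    |(φ (k + 1) - μ) * π (k + 1)| ≤ (K + |φ 0 - μ|) * (α / (β + k) * π k) := by
  have hgrowth : |φ (k + 1) - μ| ≤ (K + |φ 0 - μ|) * (k + 1) := by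
    have hφk := hφ (k + 1)
    have htri := abs_sub_le (φ (k + 1)) (φ 0) μ
    have hmul := mul_nonneg (abs_nonneg (φ 0 - μ)) k.cast_nonneg
    push_cast at hφk
    linarith
  rw [abs_mul, abs_of_pos (hπ.pos _), ← hπ.succ_mul_succ hβ, ← mul_assoc]
  exact mul_le_mul_of_nonneg_right hgrowth (hπ.pos _).le

lemma abs_steinSolution_le (hπ : IsBirthDeathDistribution α (pbdDeathRate β) π) (hα : 0 < α)
    (hβ : 0 < β) (hφ : ∀ k : ℕ, |φ k - φ 0| ≤ K * k) (n : ℕ) :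
    |steinSolution α π φ n| ≤ (K + |φ 0 - ∑' j, φ j * π j|) / π 0 / (β + n) := by
  set μ := ∑' j, φ j * π j
  set L := K + |φ 0 - μ|
  have hL : 0 ≤ L := add_nonneg (by simpa using (abs_nonneg _).trans (hφ 1)) (abs_nonneg _)
  have hterm (k : ℕ) :
      ‖(φ (k + (n + 1)) - μ) * π (k + (n + 1))‖ ≤ L * (α / (β + n)) * π (k + n) := by
    have hpos := hπ.pos (k + n)
    refine (hπ.abs_sub_mul_succ_le hβ hφ μ (k + n)).trans ?_
    rw [mul_assoc]
    gcongr
    exact Nat.le_add_left n k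
  have hshift := (summable_nat_add_iff n).2 hπ.hasSum_one.summable
  have htail : ∑' k, π (k + n) ≤ π n / π 0 := by
    rw [le_div_iff₀' (hπ.pos 0)]
    exact hπ.zero_mul_tsum_add_le hα (pbdDeathRate_monotone hβ.le) n
  have hn := hπ.pos n
  rw [hπ.steinSolution_eq_neg_tsum (hπ.summable_mul_of_linear_growth hα.le hβ hφ), abs_div, abs_neg,
    abs_of_pos (mul_pos hα hn), div_le_iff₀ (mul_pos hα hn)]
  calc |∑' k, (φ (k + (n + 1)) - μ) * π (k + (n + 1))|
      ≤ L * (α / (β + n)) * ∑' k, π (k + n) :=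
        tsum_of_norm_bounded (hshift.hasSum.mul_left _) hterm
    _ ≤ L * (α / (β + n)) * (π n / π 0) := by gcongr
    _ = L / π 0 / (β + n) * (α * π n) := by ring

lemma tendsto_steinSolution_zero (hπ : IsBirthDeathDistribution α (pbdDeathRate β) π) (hα : 0 < α)
    (hβ : 0 < β) (hφ : ∀ k : ℕ, |φ k - φ 0| ≤ K * k) :
    Tendsto (steinSolution α π φ) atTop (𝓝 0) :=
  squeeze_zero_norm (hπ.abs_steinSolution_le hα hβ hφ) <| tendsto_const_nhds.div_atTop <|
    tendsto_atTop_add_const_left _ _ tendsto_natCast_atTop_atTop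

lemma isCompletelyMonotone_steinSolution (hπ : IsBirthDeathDistribution α (pbdDeathRate β) π)
    (hα : 0 < α) (hβ : 0 < β) (hφ : IsCompletelyMonotone (-Δ_[1] φ)) :
    IsCompletelyMonotone (steinSolution α π φ) := by
  have hincrement (k : ℕ) : |φ (k + 1) - φ k| ≤ -Δ_[1] φ 0 := by
    have hk := hφ.nonneg k
    have hk0 := hφ.antitone k.zero_le
    simp only [Pi.neg_apply] at hk hk0
    rw [abs_le, ← fwdDiff]
    constructor <;> linarith
  have hgrowth (k : ℕ) : |φ k - φ 0| ≤ -Δ_[1] φ 0 * k := by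
    induction k with
    | zero => simp
    | succ k ih =>
      have htri := abs_sub_le (φ (k + 1)) (φ k) (φ 0)
      push_cast
      linarith [hincrement k]
  refine isCompletelyMonotone_of_birthDeathGenerator_eq hα.le hβ (fun n => ?_)
    (hπ.tendsto_steinSolution_zero hα hβ hgrowth) hφ
  rw [← fwdDiff_pbdDeathRate]
  exact hπ.birthDeathGenerator_steinSolution hα.ne' (pbdDeathRate_zero β) φ n

lemma isCompletelyMonotone_tailRatio (hπ : IsBirthDeathDistribution α (pbdDeathRate β) π)
    (hα : 0 < α) (hβ : 0 < β) : IsCompletelyMonotone (tailRatio α π) := by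
  have hpos := hπ.pos 0
  have hneg : -Δ_[1] (Pi.single 0 1 : ℕ → ℝ) = Pi.single 0 1 := by
    rw [fwdDiff_single_zero, neg_smul, one_smul, neg_neg]
  have hsingle := hπ.isCompletelyMonotone_steinSolution hα hβ
    (hneg.symm ▸ isCompletelyMonotone_single_zero)
  rw [steinSolution_single_zero] at hsingle
  simpa [smul_smul, hpos.ne'] using hsingle.const_smul (inv_nonneg.2 hpos.le)

lemma iterate_fwdDiff_steinInverse_one_nonneg
    (hπ : IsBirthDeathDistribution α (pbdDeathRate β) π) (hα : 0 < α) (hβ : 0 ≤ β) (k n : ℕ) :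
    0 ≤ Δ_[1] ^[k] (steinInverse α π 1) n := by
  refine iterate_fwdDiff_nonneg_of_birthDeathGenerator_eq (h := (0 : ℝ) • 0) hα hβ (fun n => ?_)
    (fun n => ?_) (fun k n => ?_) k n
  · rw [← fwdDiff_pbdDeathRate, hπ.birthDeathGenerator_steinInverse hα.ne' (pbdDeathRate_zero β)]
    simp [fwdDiff]
  · refine div_nonneg (Finset.sum_nonneg fun k _ => ?_) (mul_nonneg hα.le (hπ.pos n).le)
    simpa using (hπ.pos k).le
  · rw [fwdDiff_iter_const_smul, zero_smul, Pi.zero_apply]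

lemma isCompletelyMonotone_steinSolution_neg_cast
    (hπ : IsBirthDeathDistribution α (pbdDeathRate β) π) (hα : 0 < α) (hβ : 0 < β) :
    IsCompletelyMonotone (steinSolution α π fun k => -k) := by
  refine hπ.isCompletelyMonotone_steinSolution hα hβ ?_
  convert isCompletelyMonotone_one using 1
  ext n
  rw [Pi.neg_apply, fwdDiff_neg_cast, neg_neg, Pi.one_apply]

lemma fwdDiff_iterate_two_steinSolution_neg_cast_le
    (hπ : IsBirthDeathDistribution α (pbdDeathRate β) π) (hα : 0 < α) (hβ : 0 < β) (n : ℕ) :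
    Δ_[1] ^[2] (steinSolution α π fun k => -k) n ≤ 1 / (α + β * (1 + β + α / 2)) := by
  set G := steinSolution α π fun k => -k
  have hG : IsCompletelyMonotone G := hπ.isCompletelyMonotone_steinSolution_neg_cast hα hβ
  have hgen (n : ℕ) :
      birthDeathGenerator α (pbdDeathRate β) G n - (β + 2 * n) * G n = (-1 : ℝ) := by
    rw [← fwdDiff_pbdDeathRate, hπ.birthDeathGenerator_steinSolution hα.ne' (pbdDeathRate_zero β),
      fwdDiff_neg_cast]
  have hfirst : α * Δ_[1] G 0 - β * G 0 = -1 := by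
    simpa [birthDeathGenerator_zero] using hgen 0
  have hsecond : α * Δ_[1] ^[2] G 0 - 2 * (β + 1) * Δ_[1] G 0 = 2 * G 0 := by
    have h := birthDeathGenerator_iterate_fwdDiff (h := fun _ => -1) hgen 1 0
    rw [birthDeathGenerator_zero, ← Function.iterate_succ_apply' (Δ_[1])] at h
    rw [Function.iterate_one, Nat.sub_self, Function.iterate_zero_apply, fwdDiff_const] at h
    norm_num at h
    exact h
  have hdecay : Δ_[1] ^[2] G 0 ≤ -Δ_[1] G 0 := by
    have h := hG.neg_fwdDiff.nonneg 1
    rw [fwdDiff_iterate_two_apply]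
    simp only [Pi.neg_apply, fwdDiff] at h ⊢
    linarith
  refine (hG.iterate_fwdDiff_two.antitone n.zero_le).trans ?_
  rw [le_div_iff₀ (by positivity)]
  have hscaled := mul_le_mul_of_nonneg_left hdecay (by positivity : 0 ≤ α + β * (β + 1))
  linear_combination hscaled + β / 2 * hsecond - hfirst

section Lipschitz

variable {f : ℕ → ℝ}

lemma summable_mul_of_lipschitz (hπ : IsBirthDeathDistribution α (pbdDeathRate β) π) (hα : 0 ≤ α)
    (hβ : 0 < β) (hf : ∀ i j : ℕ, |f i - f j| ≤ |(i : ℝ) - j|) : Summable fun k => f k * π k :=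
  hπ.summable_mul_of_linear_growth (K := 1) hα hβ fun k => by simpa using hf k 0

lemma abs_fwdDiff_steinSolution_zero_le_of_lipschitz
    (hπ : IsBirthDeathDistribution α (pbdDeathRate β) π) (hα : 0 < α) (hβ : 0 < β)
    (hf : ∀ i j : ℕ, |f i - f j| ≤ |(i : ℝ) - j|) : |Δ_[1] (steinSolution α π f) 0| ≤ 2 / α := by
  have hcompare := hπ.abs_fwdDiff_steinSolution_zero_le (ψ := fun k => -k) hα (pbdDeathRate_zero β)
    (pbdDeathRate_nonneg hβ.le 1) (hπ.summable_mul_of_lipschitz hα.le hβ hf)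
    (hπ.summable_neg_cast_mul hα.le hβ) (fun _ _ => abs_sub_le_neg_cast_sub hf)
  have hextremal := (hπ.isCompletelyMonotone_steinSolution_neg_cast hα hβ).neg_fwdDiff.nonneg 0
  rw [fwdDiff_neg_cast] at hcompare
  rw [Pi.neg_apply] at hextremal
  linear_combination hcompare + hextremal

lemma abs_fwdDiff_iterate_two_steinSolution_le_of_lipschitz
    (hπ : IsBirthDeathDistribution α (pbdDeathRate β) π) (hα : 0 < α) (hβ : 0 < β)
    (hf : ∀ i j : ℕ, |f i - f j| ≤ |(i : ℝ) - j|) (n : ℕ) :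
    |Δ_[1] ^[2] (steinSolution α π f) n| ≤ 2 / α + 1 / (α + β * (1 + β + α / 2)) := by
  have hcompare := hπ.abs_fwdDiff_iterate_two_steinSolution_le (ψ := fun k => -k) hα
    (hπ.summable_mul_of_lipschitz hα.le hβ hf) (hπ.summable_neg_cast_mul hα.le hβ)
    (fun _ _ => abs_sub_le_neg_cast_sub hf)
    ((hπ.isCompletelyMonotone_tailRatio hα hβ).iterate_fwdDiff_two.nonneg n)
    (hπ.iterate_fwdDiff_steinInverse_one_nonneg hα hβ.le 2 n)
  have hextremal := hπ.fwdDiff_iterate_two_steinSolution_neg_cast_le hα hβ n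
  rw [fwdDiff_neg_cast] at hcompare
  linear_combination hcompare + hextremal

end Lipschitz

end Polynomial

end IsBirthDeathDistribution

lemma isBirthDeathDistribution_of_eq_prod {α C : ℝ} {d π : ℕ → ℝ} (hα : 0 < α) (hC : 0 < C)
    (hd : ∀ n, 0 < d (n + 1)) (hπ : ∀ n, π n = C * α ^ n / ∏ i ∈ Finset.range n, d (i + 1))
    (hπ1 : ∑' n, π n = 1) : IsBirthDeathDistribution α d π where
  pos n := by
    rw [hπ]
    exact div_pos (by positivity) (Finset.prod_pos fun i _ => hd i)
  detailed_balance n := by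
    have hprod := (Finset.prod_pos fun i (_ : i ∈ Finset.range n) => hd i).ne'
    have hdn := (hd n).ne'
    rw [hπ, hπ, Finset.prod_range_succ]
    field_simp
    rw [pow_succ']
  hasSum_one := by
    have hsummable : Summable π := by
      by_contra hdiverges
      exact zero_ne_one ((tsum_eq_zero_of_not_summable hdiverges).symm.trans hπ1)
    exact hπ1 ▸ hsummable.hasSum

/-- bound on the second difference `|Δ²g_f n|` for the PBD(α;0,β,1) Stein solution. -/
theorem stmt_3
    (α β : ℝ) (hα : 0 < α) (hβ : 0 < β)
    (C : ℝ) (hC : 0 < C) (π : ℕ → ℝ)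
    (hπ : ∀ n : ℕ, π n =
      C * α ^ n / ∏ i ∈ Finset.range n, (β * ((i : ℝ) + 1) + ((i : ℝ) + 1) * (i : ℝ)))
    (hπ1 : ∑' n, π n = 1)
    (f : ℕ → ℝ) (hf : ∀ x y : ℕ, |f x - f y| ≤ |(x : ℝ) - (y : ℝ)|)
    (hfs : Summable fun n => |f n| * π n)
    (g : ℕ → ℝ) (hg0 : g 0 = g 1)
    (hg : ∀ n : ℕ, α * g (n + 1) - (β * (n : ℝ) + (n : ℝ) * ((n : ℝ) - 1)) * g n
      = f n - ∑' k, f k * π k)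
    :
    ∀ n : ℕ, |g (n + 2) - 2 * g (n + 1) + g n| ≤ 2 / α + 1 / (α + β * (1 + β + α / 2)) ∧
      |g (n + 2) - 2 * g (n + 1) + g n| ≤ 3 / α := by
  have hdist : IsBirthDeathDistribution α (pbdDeathRate β) π :=
    isBirthDeathDistribution_of_eq_prod hα hC
      (fun n => by rw [pbdDeathRate_succ]; positivity)
      (fun n => by simpa [pbdDeathRate] using hπ n) hπ1
  have hshift : (fun n => g (n + 1)) = steinSolution α π f :=
    hdist.eq_steinInverse hα.ne' (by simpa using hg 0)
      fun n => sub_eq_iff_eq_add'.1 (hg (n + 1))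
  have hbound (n : ℕ) :
      |g (n + 2) - 2 * g (n + 1) + g n| ≤ 2 / α + 1 / (α + β * (1 + β + α / 2)) := by
    cases n with
    | zero =>
      have hzero : g 2 - 2 * g 1 + g 0 = Δ_[1] (steinSolution α π f) 0 := by
        rw [← hshift, fwdDiff, hg0]
        ring
      rw [zero_add, zero_add, hzero]
      exact (hdist.abs_fwdDiff_steinSolution_zero_le_of_lipschitz hα hβ hf).trans
        (le_add_of_nonneg_right (by positivity))
    | succ n =>
      have hsucc := hdist.abs_fwdDiff_iterate_two_steinSolution_le_of_lipschitz hα hβ hf n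
      rwa [← hshift, fwdDiff_iterate_two_apply] at hsucc
  have hthree : 2 / α + 1 / (α + β * (1 + β + α / 2)) ≤ 2 / α + 1 / α := by
    gcongr
    exact le_add_of_nonneg_right (by positivity)
  exact fun n => ⟨hbound n, (hbound n).trans (hthree.trans_eq (by ring))⟩
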